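/- Under Hypothesis (hy), the map Θ: B → Λ defined by Θ(λ) = λ if m(λ) ≤ λ and Θ(λ) = m(λ)' if m(λ) > λ is injective. -/

import Mathlib

open scoped Classical

/-!
Hypothesis (hy): `𝓗` is a symmetric algebra over an integral domain `A` with a ring
homomorphism `θ : A → L`, `K𝓗` split semisimple with `Irr(K𝓗) = {V^λ : λ ∈ Λ}`, `L𝓗`
split, together with a unitriangular basic set `(B, ≤, Ψ)` and an algebra involution
`φ ∈ Aut(𝓗)` with `φ² = id`.  We model this combinatorially: `Λ` carries the total order
`≤`, `B ⊆ Λ`, `d l μ` denotes the decomposition number `d_{l, Ψ(μ)}` (for `μ ∈ B`),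
`conj : Λ → Λ` is the involution `λ ↦ λ'` with `(V^λ)^φ ≅ V^{λ'}`, and `m : B → B` is the
involution with `Ψ(λ)^φ ≅ Ψ(m λ)`.  The defining properties are: `d μ μ = 1` for `μ ∈ B`,
`d l μ = 0` unless `l ≤ μ`, and `d l μ = d (conj l) (m μ)`.
-/

/-!
Twisting by `φ` carries the nonzero diagonal decomposition number `d μ μ` to `d (conj μ) (m μ)`, so
unitriangularity gives `conj μ ≤ m μ` on `B`. Each branch of `Θ` is injective because `conj` and `m`
are involutions. If `Θ` takes the value `a = conj (m b)` at `a` by its first branch and at `b` by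
its second, then `m b = conj a ≤ m a ≤ a = conj (m b) ≤ m (m b) = b`, which contradicts the choice
of the second branch at `b`.
-/

section

variable {Λ : Type*} {B : Set Λ} {conj m : Λ → Λ}

theorem conj_le_of_twist_invariant [LE Λ] {R : Type*} [Zero R] {d : Λ → Λ → R}
    (hmB : Set.MapsTo m B B) (hdiag : ∀ μ ∈ B, d μ μ ≠ 0)
    (htri : ∀ l, ∀ μ ∈ B, d l μ ≠ 0 → l ≤ μ)
    (htwist : ∀ μ ∈ B, d μ μ = d (conj μ) (m μ)) :
    ∀ μ ∈ B, conj μ ≤ m μ := fun μ hμ =>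
  htri (conj μ) (m μ) (hmB hμ) (htwist μ hμ ▸ hdiag μ hμ)

variable [Preorder Λ]

theorem apply_le_self_of_apply_conj_le (hconj : Set.LeftInvOn conj conj B) (hmB : Set.MapsTo m B B)
    (hm : Set.LeftInvOn m m B) (hle : ∀ μ ∈ B, conj μ ≤ m μ) {b : Λ} (hb : b ∈ B)
    (hcb : conj (m b) ∈ B) (h : m (conj (m b)) ≤ conj (m b)) : m b ≤ b :=
  calc
    m b = conj (conj (m b)) := (hconj (hmB hb)).symm
    _ ≤ m (conj (m b)) := hle _ hcb
    _ ≤ conj (m b) := h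
    _ ≤ m (m b) := hle _ (hmB hb)
    _ = b := hm hb

theorem theta_injective_general [DecidableLE Λ] (hconj : Set.LeftInvOn conj conj B)
    (hmB : Set.MapsTo m B B) (hm : Set.LeftInvOn m m B) (hle : ∀ μ ∈ B, conj μ ≤ m μ) :
    Set.InjOn (fun μ => if m μ ≤ μ then μ else conj (m μ)) B := by
  intro a ha b hb hab
  dsimp only at hab
  split_ifs at hab with hma hmb hmb
  · exact hab
  · subst hab
    exact absurd (apply_le_self_of_apply_conj_le hconj hmB hm hle hb ha hma) hmb
  · subst hab
    exact absurd (apply_le_self_of_apply_conj_le hconj hmB hm hle ha hb hmb) hma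
  · exact hm.injOn ha hb (hconj.injOn (hmB ha) (hmB hb) hab)

end

/-- Under Hypothesis (hy), the map `Θ : B → Λ` defined by `Θ(λ) = λ` if
`m(λ) ≤ λ` and `Θ(λ) = m(λ)'` if `m(λ) > λ` is injective. -/
theorem theta_injective {Λ : Type*} [LinearOrder Λ] (B : Set Λ)
    (d : Λ → Λ → ℕ) (conj : Λ → Λ) (m : Λ → Λ)
    (hconj : Function.Involutive conj)
    (hmB : ∀ μ ∈ B, m μ ∈ B) (hm : ∀ μ ∈ B, m (m μ) = μ)
    (hone : ∀ μ ∈ B, d μ μ = 1)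
    (hzero : ∀ l : Λ, ∀ μ ∈ B, d l μ ≠ 0 → l ≤ μ)
    (hcompat : ∀ l : Λ, ∀ μ ∈ B, d l μ = d (conj l) (m μ)) :
    Set.InjOn (fun μ => if m μ ≤ μ then μ else conj (m μ)) B :=
  theta_injective_general (hconj.leftInverse.leftInvOn B) hmB hm <|
    conj_le_of_twist_invariant hmB (fun μ hμ => (hone μ hμ).trans_ne one_ne_zero) hzero
      fun μ => hcompat μ μ
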